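/- Let n ≥ 2. There exists a constant C > 0 such that for all t > 0, all indices j,k ∈ {1,…,n}, all multi-indices β ∈ ℕⁿ with |β| ≤ 1, and all x ∈ ℝⁿ, the Oseen kernel K_t is C¹ and satisfies |∂^β K_t^{jk}(x)| ≤ C t^{−(n+|β|)/2} (1 + t^{−1/2}|x|)^{−n−|β|}. -/

import Mathlib

open MeasureTheory Real ENNReal
open scoped ENNReal NNReal FourierTransform RealInnerProductSpace

noncomputable section

/-- `ℝⁿ` with the Euclidean norm. -/
abbrev Rn (n : ℕ) := EuclideanSpace ℝ (Fin n)
/-- `ℂⁿ` with the Euclidean norm. -/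
abbrev Cn (n : ℕ) := EuclideanSpace ℂ (Fin n)
/-- `ℂⁿ ⊗ ℂⁿ` (i.e. `n × n` complex matrices) with the Frobenius norm. -/
abbrev Mn (n : ℕ) := EuclideanSpace ℂ (Fin n × Fin n)

instance (n : ℕ) : MeasurableSpace (Cn n) := borel _
instance (n : ℕ) : BorelSpace (Cn n) := ⟨rfl⟩
instance (n : ℕ) : MeasurableSpace (Mn n) := borel _
instance (n : ℕ) : BorelSpace (Mn n) := ⟨rfl⟩

/-- The Gaussian heat kernel `h_t(x) = (4πt)^{-n/2} exp(-|x|²/(4t))`. -/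
def heatKernel (n : ℕ) (t : ℝ) (x : Rn n) : ℝ :=
  (4 * π * t) ^ (-(n : ℝ) / 2) * Real.exp (-‖x‖ ^ 2 / (4 * t))

/-- The Oseen kernel
`K_t^{jk}(x) = ∫_{ℝⁿ} (δ_{jk} - ξ_jξ_k/|ξ|²) e^{-4π²t|ξ|²} e^{2πi x·ξ} dξ`;
convolution with `K_t` realizes `e^{tΔ}ℙ`, with `ℙ` the Leray projection. -/
def oseenKernel (n : ℕ) (t : ℝ) (j k : Fin n) (x : Rn n) : ℂ :=
  ∫ ξ : Rn n,
    (((if j = k then 1 else 0) - ξ j * ξ k / ‖ξ‖ ^ 2 : ℝ) : ℂ) *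
      Complex.exp (-(4 * π ^ 2 * t * ‖ξ‖ ^ 2) : ℝ) *
      Complex.exp (2 * π * Complex.I * (⟪x, ξ⟫ : ℝ))

/-- The partial derivative `∂_l f` of a function `f : ℝⁿ → ℂ`. -/
def pdiff {n : ℕ} (l : Fin n) (f : Rn n → ℂ) (x : Rn n) : ℂ :=
  fderiv ℝ f x (EuclideanSpace.single l 1)

open scoped SchwartzMap

lemma aux_poly_exp (M : ℕ) (b : ℝ) (hb : 0 < b) :
    ∃ C : ℝ, 0 ≤ C ∧ ∀ r : ℝ, 0 ≤ r → (1 + r) ^ M * Real.exp (-(b * r ^ 2)) ≤ C := by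
  refine ⟨M.factorial * Real.exp (1 + 1 / (4 * b)), by positivity, fun r hr => ?_⟩
  have h1 : (1 + r) ^ M ≤ M.factorial * Real.exp (1 + r) := by
    have := Real.pow_div_factorial_le_exp (1 + r) (by linarith) M
    rw [div_le_iff₀ (by positivity)] at this
    linarith
  calc (1 + r) ^ M * Real.exp (-(b * r ^ 2))
      ≤ (M.factorial * Real.exp (1 + r)) * Real.exp (-(b * r ^ 2)) := by gcongr
    _ = M.factorial * Real.exp (1 + r - b * r ^ 2) := by
        rw [mul_assoc, ← Real.exp_add]; ring_nf
    _ ≤ _ := by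
        gcongr
        have : 1 / (4 * b) - r + b * r ^ 2 = b * (r - 1 / (2 * b)) ^ 2 := by
          field_simp; ring
        nlinarith [mul_nonneg hb.le (sq_nonneg (r - 1 / (2 * b)))]

lemma aux_gauss_decay (n : ℕ) (b : ℝ) (hb : 0 < b) (k N : ℕ) :
    ∃ C : ℝ, ∀ x : Rn n,
      ‖x‖ ^ k * ‖iteratedFDeriv ℝ N (fun ξ : Rn n => Real.exp (-(b * ‖ξ‖ ^ 2))) x‖ ≤ C := by
  have hf : (fun ξ : Rn n => -(b * ‖ξ‖ ^ 2)).HasTemperateGrowth := by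
    have := ((Function.HasTemperateGrowth.const (E := Rn n) b).mul
      (Function.hasTemperateGrowth_norm_sq (H := Rn n))).neg
    exact this
  obtain ⟨m, K, hK, hb'⟩ := hf.norm_iteratedFDeriv_le_uniform N
  obtain ⟨C, hC0, hC⟩ := aux_poly_exp (k + m * N) b hb
  refine ⟨N.factorial * (K + 1) ^ N * C, fun x => ?_⟩
  have hx : (1 : ℝ) ≤ 1 + ‖x‖ := by linarith [norm_nonneg x]
  have h1 := norm_iteratedFDeriv_comp_le (𝕜 := ℝ) (g := Real.exp) (n := N) (N := N)
    (f := fun ξ : Rn n => -(b * ‖ξ‖ ^ 2)) Real.contDiff_exp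
    (hf.1.of_le (by exact_mod_cast le_top)) le_rfl x
    (C := Real.exp (-(b * ‖x‖ ^ 2))) (D := (K + 1) * (1 + ‖x‖) ^ m) (by
      intro i hi
      rw [norm_iteratedFDeriv_eq_norm_iteratedDeriv]
      simp [iteratedDeriv_eq_iterate]) (by
      intro i h1 hi
      refine (hb' i hi x).trans ?_
      have : (1 : ℝ) ≤ (K + 1) * (1 + ‖x‖) ^ m :=
        one_le_mul_of_one_le_of_one_le (by linarith) (one_le_pow₀ hx)
      calc K * (1 + ‖x‖) ^ m ≤ (K + 1) * (1 + ‖x‖) ^ m := by gcongr; linarith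
        _ ≤ _ := le_self_pow₀ this (by omega))
  calc ‖x‖ ^ k * ‖iteratedFDeriv ℝ N (fun ξ : Rn n => Real.exp (-(b * ‖ξ‖ ^ 2))) x‖
      ≤ (1 + ‖x‖) ^ k * (N.factorial * Real.exp (-(b * ‖x‖ ^ 2)) *
          ((K + 1) * (1 + ‖x‖) ^ m) ^ N) := by
        gcongr
        · linarith
        · exact h1
    _ = N.factorial * (K + 1) ^ N * ((1 + ‖x‖) ^ (k + m * N) * Real.exp (-(b * ‖x‖ ^ 2))) := by
        rw [pow_add, pow_mul, mul_pow]; ring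
    _ ≤ _ := by gcongr; exact hC _ (norm_nonneg _)

def gaussS (n : ℕ) (b : ℝ) (hb : 0 < b) : 𝓢(Rn n, ℝ) where
  toFun := fun ξ : Rn n => Real.exp (-(b * ‖ξ‖ ^ 2))
  smooth' := by
    exact Real.contDiff_exp.comp ((contDiff_const.mul (contDiff_norm_sq ℝ)).neg)
  decay' := fun k N => aux_gauss_decay n b hb k N

lemma gauss_int (n : ℕ) (b : ℝ) (hb : 0 < b) (k : ℕ) :
    Integrable (fun ξ : Rn n => ‖ξ‖ ^ k * Real.exp (-(b * ‖ξ‖ ^ 2))) := by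
  have := (gaussS n b hb).integrable_pow_mul volume k
  refine this.congr (Filter.Eventually.of_forall fun ξ => ?_)
  have : gaussS n b hb ξ = Real.exp (-(b * ‖ξ‖ ^ 2)) := rfl
  simp [this]

def OI {n : ℕ} (P : Rn n → ℂ) (t : ℝ) (x : Rn n) : ℂ :=
  ∫ ξ : Rn n, P ξ * Complex.exp (-(4 * π ^ 2 * t * ‖ξ‖ ^ 2) : ℝ) *
      Complex.exp (2 * π * Complex.I * (⟪x, ξ⟫ : ℝ))

lemma norm_char (a : ℝ) : ‖Complex.exp (2 * π * Complex.I * (a : ℝ))‖ = 1 := by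
  have : 2 * π * Complex.I * (a : ℝ) = ((2 * π * a : ℝ) : ℂ) * Complex.I := by push_cast; ring
  rw [this, Complex.norm_exp_ofReal_mul_I]

lemma OI_eq_fourier {n : ℕ} (P : Rn n → ℂ) (t : ℝ) (x : Rn n) :
    OI P t x = 𝓕 (fun ξ => P ξ * Complex.exp (-(4 * π ^ 2 * t * ‖ξ‖ ^ 2) : ℝ)) (-x) := by
  rw [Real.fourier_eq', OI]
  congr 1
  ext ξ
  rw [inner_neg_right, real_inner_comm, smul_eq_mul, mul_comm]
  congr 2
  push_cast
  ring

/-- decay at the level `t = 1`. -/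
lemma OI_one_bound {n : ℕ} (P : Rn n → ℂ) (hP : P.HasTemperateGrowth) (p : ℕ) :
    ∃ C : ℝ, 0 ≤ C ∧ ∀ x : Rn n, (1 + ‖x‖) ^ p * ‖OI P 1 x‖ ≤ C := by
  let G : 𝓢(Rn n, ℂ) := SchwartzMap.bilinLeftCLM
    ((ContinuousLinearMap.lsmul ℝ ℝ : ℝ →L[ℝ] ℂ →L[ℝ] ℂ)) hP
    (gaussS n (4 * π ^ 2 * 1) (by positivity))
  refine ⟨2 ^ p * (Finset.Iic (p, 0)).sup (fun m => SchwartzMap.seminorm ℝ m.1 m.2) (𝓕 G),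
    by positivity, fun x => ?_⟩
  have h := SchwartzMap.one_add_le_sup_seminorm_apply (𝕜 := ℝ) (m := (p, 0)) (k := p) (n := 0)
    le_rfl le_rfl (𝓕 G) (-x)
  rw [norm_iteratedFDeriv_zero, norm_neg] at h
  rw [OI_eq_fourier]
  rw [SchwartzMap.fourier_coe] at h
  have hG : (G : Rn n → ℂ) =
      fun ξ => P ξ * Complex.exp (-(4 * π ^ 2 * 1 * ‖ξ‖ ^ 2) : ℝ) := by
    ext ξ
    have : gaussS n (4 * π ^ 2 * 1) (by positivity) ξ
      = Real.exp (-(4 * π ^ 2 * 1 * ‖ξ‖ ^ 2)) := rfl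
    simp only [G, SchwartzMap.bilinLeftCLM_apply, this]
    rw [ContinuousLinearMap.lsmul_apply, Complex.real_smul, Complex.ofReal_exp, mul_comm]
  rw [hG] at h
  exact h

lemma OI_bound {n : ℕ} (P : Rn n → ℂ) (hP : P.HasTemperateGrowth) (m : ℕ)
    (hom : ∀ r : ℝ, 0 < r → ∀ ξ, P (r • ξ) = (r : ℂ) ^ m * P ξ) :
    ∃ C : ℝ, 0 ≤ C ∧ ∀ s : ℝ, 0 < s → ∀ x : Rn n,
      ‖OI P s x‖ ≤ C * ((√s + ‖x‖) ^ (n + m))⁻¹ := by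
  obtain ⟨C, hC0, hC⟩ := OI_one_bound P hP (n + m)
  refine ⟨C, hC0, fun s hs x => ?_⟩
  set r := √s with hr
  have hr0 : 0 < r := Real.sqrt_pos.2 hs
  have hrs : r ^ 2 = s := Real.sq_sqrt hs.le
  have key : OI P s x = ((r : ℂ) ^ m)⁻¹ * ((r ^ n)⁻¹ • OI P 1 (r⁻¹ • x)) := by
    have h := Measure.integral_comp_smul_of_nonneg (volume : Measure (Rn n))
      (fun η : Rn n => P η * Complex.exp (-(4 * π ^ 2 * 1 * ‖η‖ ^ 2) : ℝ) *
      Complex.exp (2 * π * Complex.I * (⟪r⁻¹ • x, η⟫ : ℝ))) r (hR := hr0.le)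
    rw [finrank_euclideanSpace_fin] at h
    rw [OI, OI, ← h, ← integral_const_mul]
    congr 1
    ext ξ
    rw [hom r hr0, norm_smul, inner_smul_left, inner_smul_right, ← hrs]
    have e1 : (starRingEnd ℝ) r⁻¹ * (r * ⟪x, ξ⟫) = ⟪x, ξ⟫ := by
      simp; field_simp
    have e2 : 4 * π ^ 2 * 1 * (‖r‖ * ‖ξ‖) ^ 2 = 4 * π ^ 2 * r ^ 2 * ‖ξ‖ ^ 2 := by
      rw [Real.norm_of_nonneg hr0.le]; ring
    rw [e1, e2]
    have : (r : ℂ) ^ m ≠ 0 := pow_ne_zero _ (by exact_mod_cast hr0.ne')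
    field_simp
  have h1 := hC (r⁻¹ • x)
  have h2 : 1 + ‖r⁻¹ • x‖ = (r + ‖x‖) / r := by
    rw [norm_smul, norm_inv, Real.norm_of_nonneg hr0.le]; field_simp
  rw [h2, div_pow, div_mul_eq_mul_div, div_le_iff₀ (by positivity)] at h1
  have hpos : 0 < r + ‖x‖ := by positivity
  rw [key, norm_mul, norm_smul, norm_inv, norm_inv, norm_pow, norm_pow, Complex.norm_real,
    Real.norm_of_nonneg hr0.le, ← div_eq_mul_inv, le_div_iff₀ (by positivity)]
  rw [show (r ^ m)⁻¹ * ((r ^ n)⁻¹ * ‖OI P 1 (r⁻¹ • x)‖) * (r + ‖x‖) ^ (n + m)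
    = ((r + ‖x‖) ^ (n + m) * ‖OI P 1 (r⁻¹ • x)‖) / r ^ (n + m) by
      rw [pow_add r]; field_simp]
  rwa [div_le_iff₀ (by positivity)]

lemma OI_aesm {n : ℕ} (t : ℝ) (P : Rn n → ℂ) (hP : AEStronglyMeasurable P volume) :
    AEStronglyMeasurable (fun ξ => P ξ * Complex.exp (-(4 * π ^ 2 * t * ‖ξ‖ ^ 2) : ℝ)) volume :=
  hP.mul (Continuous.aestronglyMeasurable (by fun_prop))

lemma OI_diff {n : ℕ} (t : ℝ) (ht : 0 < t) (P : Rn n → ℂ) (hP : AEStronglyMeasurable P volume)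
    (A : ℝ) (hA : ∀ ξ, ‖P ξ‖ ≤ A) :
    ContDiff ℝ 1 (OI P t) ∧ ∀ l x, pdiff l (OI P t) x =
      2 * π * Complex.I * OI (fun ξ => (ξ l : ℂ) * P ξ) t x := by
  set f : Rn n → ℂ := fun ξ => P ξ * Complex.exp (-(4 * π ^ 2 * t * ‖ξ‖ ^ 2) : ℝ) with hf
  have hfm : AEStronglyMeasurable f volume := OI_aesm t P hP
  have hint : ∀ k : ℕ, Integrable (fun v => ‖v‖ ^ k * ‖f v‖) volume := by
    intro k
    refine ((gauss_int n (4 * π ^ 2 * t) (by positivity) k).const_mul A).mono'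
      ((Continuous.aestronglyMeasurable (by fun_prop)).mul hfm.norm)
      (Filter.Eventually.of_forall fun ξ => ?_)
    rw [Real.norm_of_nonneg (by positivity), hf]
    simp only [norm_mul]
    rw [← Complex.ofReal_exp, Complex.norm_real, Real.norm_of_nonneg (Real.exp_pos _).le]
    calc _ ≤ ‖ξ‖ ^ k * (A * Real.exp (-(4 * π ^ 2 * t * ‖ξ‖ ^ 2))) := by gcongr; exact hA ξ
      _ = _ := by ring
  have hi0 : Integrable f := by
    rw [← integrable_norm_iff hfm]; simpa using hint 0
  have hi1 : Integrable (fun v => ‖v‖ * ‖f v‖) := by simpa using hint 1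
  have heq : OI P t = (𝓕 f) ∘ (fun x => -x) := by
    ext x; exact OI_eq_fourier P t x
  refine ⟨?_, fun l x => ?_⟩
  · rw [heq]
    exact (Real.contDiff_fourier (N := 1) (fun k _ => hint k)).comp contDiff_neg
  · have hd := HasFDerivAt.comp x (Real.hasFDerivAt_fourier hi0 hi1 (-x))
      (hasFDerivAt_id (𝕜 := ℝ) x).neg
    have hd2 : HasFDerivAt (OI P t) ((𝓕 (VectorFourier.fourierSMulRight (innerSL ℝ) f) (-x)).comp
        (-ContinuousLinearMap.id ℝ (Rn n))) x := by rw [heq]; exact hd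
    rw [pdiff, hd2.fderiv]
    have hI : Integrable (VectorFourier.fourierSMulRight (innerSL ℝ) f) := by
      refine (hi1.const_mul (2 * π * ‖innerSL ℝ (E := Rn n)‖)).mono'
        hfm.fourierSMulRight (Filter.Eventually.of_forall fun ξ => ?_)
      rw [← mul_assoc]
      exact VectorFourier.norm_fourierSMulRight_le _ f ξ
    have e : ((𝓕 (VectorFourier.fourierSMulRight (innerSL ℝ) f) (-x)).comp
        (-ContinuousLinearMap.id ℝ (Rn n))) (EuclideanSpace.single l 1)
        = - (𝓕 (VectorFourier.fourierSMulRight (innerSL ℝ) f) (-x))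
            (EuclideanSpace.single l 1) := by simp
    refine e.trans ?_
    rw [Real.fourier_continuousLinearMap_apply hI, Real.fourier_eq', OI, ← integral_const_mul,
      ← integral_neg]
    congr 1
    ext ξ
    have e3 : ((2 * π * Complex.I * (⟪x, ξ⟫ : ℝ)) : ℂ) =
      ((-2 * π * ⟪ξ, -x⟫ : ℝ) : ℂ) * Complex.I := by
      rw [inner_neg_right, real_inner_comm]; push_cast; ring
    rw [e3]
    simp only [VectorFourier.fourierSMulRight_apply, hf, smul_eq_mul]
    have e4 : ((innerSL ℝ) ξ) (EuclideanSpace.single l (1:ℝ)) = ξ l := by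
      simp [EuclideanSpace.inner_single_right]
    rw [e4, Complex.real_smul]
    ring

lemma OI_integrable {n : ℕ} (t : ℝ) (ht : 0 < t) (P : Rn n → ℂ)
    (hP : AEStronglyMeasurable P volume)
    (A : ℝ) (k : ℕ) (hA : ∀ ξ, ‖P ξ‖ ≤ A * ‖ξ‖ ^ k) (x : Rn n) :
    Integrable (fun ξ : Rn n => P ξ * Complex.exp (-(4 * π ^ 2 * t * ‖ξ‖ ^ 2) : ℝ) *
      Complex.exp (2 * π * Complex.I * (⟪x, ξ⟫ : ℝ))) := by
  refine ((gauss_int n (4 * π ^ 2 * t) (by positivity) k).const_mul A).mono'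
      ((OI_aesm t P hP).mul (Continuous.aestronglyMeasurable (by fun_prop)))
      (Filter.Eventually.of_forall fun ξ => ?_)
  rw [norm_mul, norm_char, mul_one, norm_mul,
    ← Complex.ofReal_exp, Complex.norm_real, Real.norm_of_nonneg (Real.exp_pos _).le, ← mul_assoc]
  gcongr
  exact hA ξ

lemma exp_int_aux (c : ℝ) (hc : 0 < c) (t : ℝ) :
    IntegrableOn (fun s : ℝ => Real.exp (-(4 * π ^ 2 * s * c))) (Set.Ioi t) ∧
    ∫ s in Set.Ioi t, Real.exp (-(4 * π ^ 2 * s * c)) =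
      Real.exp (-(4 * π ^ 2 * t * c)) / (4 * π ^ 2 * c) := by
  have h : (fun s : ℝ => Real.exp (-(4 * π ^ 2 * s * c))) =
      fun s => Real.exp (-(4 * π ^ 2 * c) * s) := by ext s; ring_nf
  have hneg : -(4 * π ^ 2 * c) < 0 := by
    have : 0 < 4 * π ^ 2 * c := by positivity
    linarith
  rw [h]
  refine ⟨integrableOn_exp_mul_Ioi hneg t, ?_⟩
  rw [integral_exp_mul_Ioi hneg, neg_div_neg_eq]
  ring_nf

lemma OI_fubini {n : ℕ} (Q : Rn n → ℂ) (hQ : Continuous Q) (m : ℕ) (A : ℝ) (hA' : 0 ≤ A)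
    (hA : ∀ ξ, ‖Q ξ‖ ≤ A * ‖ξ‖ ^ (m + 2)) (t : ℝ) (ht : 0 < t) (x : Rn n) :
    OI (fun ξ => Q ξ / (‖ξ‖ : ℂ) ^ 2) t x = 4 * π ^ 2 * ∫ s in Set.Ioi t, OI Q s x := by
  have hA0 : ∀ ξ : Rn n, ‖ξ‖ = 0 → Q ξ = 0 := by
    intro ξ h
    have := hA ξ
    rw [h] at this
    simpa using this
  set F : Rn n → ℝ → ℂ := fun ξ s => Q ξ * Complex.exp (-(4 * π ^ 2 * s * ‖ξ‖ ^ 2) : ℝ) *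
      Complex.exp (2 * π * Complex.I * (⟪x, ξ⟫ : ℝ)) with hF
  have hFn : ∀ ξ s, ‖F ξ s‖ = ‖Q ξ‖ * Real.exp (-(4 * π ^ 2 * s * ‖ξ‖ ^ 2)) := by
    intro ξ s
    simp only [hF]
    rw [norm_mul, norm_char, mul_one, norm_mul,
      ← Complex.ofReal_exp, Complex.norm_real, Real.norm_of_nonneg (Real.exp_pos _).le]
  have hFc : Continuous (Function.uncurry F) := by
    simp only [hF, Function.uncurry_def]
    fun_prop
  have hint : Integrable (Function.uncurry F)
      ((volume : Measure (Rn n)).prod (volume.restrict (Set.Ioi t))) := by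
    rw [integrable_prod_iff hFc.aestronglyMeasurable]
    constructor
    · refine Filter.Eventually.of_forall fun ξ => ?_
      by_cases h : ‖ξ‖ = 0
      · simp [Function.uncurry, hF, hA0 ξ h]
      · have hp : 0 < ‖ξ‖ := lt_of_le_of_ne (norm_nonneg _) (Ne.symm h)
        have h2 := (exp_int_aux (‖ξ‖ ^ 2) (by positivity) t).1
        refine (h2.const_mul ‖Q ξ‖).mono' ?_ (Filter.Eventually.of_forall fun s => ?_)
        · exact (hFc.comp (by fun_prop : Continuous fun s : ℝ => (ξ, s))).aestronglyMeasurable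
        · exact (hFn ξ s).le
    · refine ((gauss_int n (4 * π ^ 2 * t) (by positivity) m).const_mul
        (A / (4 * π ^ 2))).mono' ?_ (Filter.Eventually.of_forall fun ξ => ?_)
      · exact hFc.norm.aestronglyMeasurable.integral_prod_right'
      · simp only [Function.uncurry, hFn]
        rw [integral_const_mul]
        by_cases h : ‖ξ‖ = 0
        · rw [hA0 ξ h, norm_zero, zero_mul, norm_zero]
          positivity
        · have hp : 0 < ‖ξ‖ := lt_of_le_of_ne (norm_nonneg _) (Ne.symm h)
          rw [(exp_int_aux (‖ξ‖ ^ 2) (by positivity) t).2, Real.norm_of_nonneg (by positivity)]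
          calc _ ≤ A * ‖ξ‖ ^ (m + 2) * (Real.exp (-(4 * π ^ 2 * t * ‖ξ‖ ^ 2)) /
                (4 * π ^ 2 * ‖ξ‖ ^ 2)) := by gcongr; exact hA ξ
            _ = _ := by rw [pow_add]; field_simp
  have hsw := integral_integral_swap hint
  have : ∀ s, OI Q s x = ∫ ξ, F ξ s := fun s => rfl
  simp only [this]
  rw [← hsw, OI, ← integral_const_mul]
  congr 1
  ext ξ
  simp only [hF]
  rw [integral_mul_const, integral_const_mul]
  simp only [← Complex.ofReal_exp]
  rw [integral_complex_ofReal]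
  by_cases h : ‖ξ‖ = 0
  · simp [hA0 ξ h]
  · have hp : 0 < ‖ξ‖ := lt_of_le_of_ne (norm_nonneg _) (Ne.symm h)
    rw [(exp_int_aux (‖ξ‖ ^ 2) (by positivity) t).2]
    have h1 : (‖ξ‖ : ℂ) ≠ 0 := by exact_mod_cast h
    have h2 : (π : ℂ) ≠ 0 := by exact_mod_cast Real.pi_ne_zero
    push_cast
    field_simp

lemma int_rpow_aux (q : ℝ) (hq : 0 < q) (t a : ℝ) (ht : 0 < t) (ha : 0 ≤ a) :
    IntegrableOn (fun s : ℝ => (s + a) ^ (-q - 1)) (Set.Ioi t) ∧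
    ∫ s in Set.Ioi t, (s + a) ^ (-q - 1) = (t + a) ^ (-q) / q := by
  have hi : IntegrableOn (fun s : ℝ => (s + a) ^ (-q - 1)) (Set.Ioi t) :=
    integrableOn_add_rpow_Ioi_of_lt (by linarith) (by linarith)
  refine ⟨hi, ?_⟩
  have hd : ∀ x ∈ Set.Ici t, HasDerivAt (fun s => (s + a) ^ (-q) / (-q)) ((x + a) ^ (-q - 1)) x := by
    intro x hx
    have hx' : 0 < x + a := by have := Set.mem_Ici.1 hx; linarith
    have := (((hasDerivAt_id x).add_const a).rpow_const (p := -q) (Or.inl hx'.ne')).div_const (-q)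
    have e : 1 * -q * (id x + a) ^ (-q - 1) / -q = (x + a) ^ (-q - 1) := by
      rw [one_mul, id]
      field_simp
    rw [e] at this
    exact this
  have hT : Filter.Tendsto (fun s => (s + a) ^ (-q) / (-q)) Filter.atTop (nhds (0 / (-q))) :=
    ((tendsto_rpow_neg_atTop hq).comp
      (Filter.tendsto_atTop_add_const_right _ a Filter.tendsto_id)).div_const _
  rw [integral_Ioi_of_hasDerivAt_of_tendsto' hd hi hT]
  field_simp
  ring

lemma OI_bound2 {n : ℕ} (hn : 0 < n) (Q : Rn n → ℂ) (hQ : Q.HasTemperateGrowth) (m : ℕ)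
    (hom : ∀ r : ℝ, 0 < r → ∀ ξ, Q (r • ξ) = (r : ℂ) ^ (m + 2) * Q ξ)
    (hA : ∀ ξ, ‖Q ξ‖ ≤ 1 * ‖ξ‖ ^ (m + 2)) :
    ∃ C : ℝ, 0 ≤ C ∧ ∀ t : ℝ, 0 < t → ∀ x : Rn n,
      ‖OI (fun ξ => Q ξ / (‖ξ‖ : ℂ) ^ 2) t x‖ ≤ C * ((√t + ‖x‖) ^ (n + m))⁻¹ := by
  obtain ⟨C, hC0, hC⟩ := OI_bound Q hQ (m + 2) hom
  set q : ℝ := ((n + m : ℕ) : ℝ) / 2 with hq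
  have hq0 : 0 < q := by
    have : 0 < n + m := by omega
    have : (0 : ℝ) < ((n + m : ℕ) : ℝ) := by exact_mod_cast this
    positivity
  refine ⟨4 * π ^ 2 * (C * (2 ^ q / q)), by positivity, fun t ht x => ?_⟩
  rw [OI_fubini Q hQ.1.continuous m 1 zero_le_one hA t ht x, norm_mul]
  have e1 : ‖(4 * π ^ 2 : ℂ)‖ = 4 * π ^ 2 := by
    simp [abs_of_pos Real.pi_pos]
  rw [e1, mul_assoc (4 * π ^ 2)]
  gcongr
  obtain ⟨hi, hv⟩ := int_rpow_aux q hq0 t (‖x‖ ^ 2) ht (by positivity)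
  have hle : ‖∫ s in Set.Ioi t, OI Q s x‖ ≤
      ∫ s in Set.Ioi t, C * (s + ‖x‖ ^ 2) ^ (-q - 1) := by
    refine norm_integral_le_of_norm_le (hi.const_mul C) ?_
    filter_upwards [self_mem_ae_restrict measurableSet_Ioi] with s hs
    have hs0 : 0 < s := ht.trans hs
    refine (hC s hs0 x).trans ?_
    gcongr
    have h1 : s + ‖x‖ ^ 2 ≤ (√s + ‖x‖) ^ 2 := by
      nlinarith [Real.sq_sqrt hs0.le, Real.sqrt_nonneg s, norm_nonneg x,
        mul_nonneg (Real.sqrt_nonneg s) (norm_nonneg x)]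
    have hp : 0 < √s + ‖x‖ := by positivity
    have h2 : ((√s + ‖x‖) ^ (n + (m + 2)))⁻¹ = ((√s + ‖x‖) ^ 2) ^ (-q - 1) := by
      rw [← Real.rpow_natCast, ← Real.rpow_neg hp.le, ← Real.rpow_natCast, ← Real.rpow_mul hp.le]
      congr 1
      rw [hq]; push_cast; ring
    rw [h2]
    exact Real.rpow_le_rpow_of_nonpos (by positivity) h1 (by linarith)
  refine hle.trans ?_
  rw [integral_const_mul, hv, mul_assoc]
  gcongr
  have hp : 0 < √t + ‖x‖ := by positivity
  have h1 : (√t + ‖x‖) ^ 2 / 2 ≤ t + ‖x‖ ^ 2 := by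
    nlinarith [Real.sq_sqrt ht.le, sq_nonneg (√t - ‖x‖)]
  have h2 : ((√t + ‖x‖) ^ (n + m))⁻¹ = ((√t + ‖x‖) ^ 2) ^ (-q) := by
    rw [← Real.rpow_natCast, ← Real.rpow_neg hp.le, ← Real.rpow_natCast, ← Real.rpow_mul hp.le]
    congr 1
    rw [hq]; push_cast; ring
  rw [h2, div_mul_eq_mul_div]
  gcongr
  calc (t + ‖x‖ ^ 2) ^ (-q) ≤ ((√t + ‖x‖) ^ 2 / 2) ^ (-q) :=
        Real.rpow_le_rpow_of_nonpos (by positivity) h1 (by linarith)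
    _ = _ := by
        rw [Real.div_rpow (by positivity) (by norm_num), Real.rpow_neg (by norm_num : (0:ℝ) ≤ 2)]
        rw [div_inv_eq_mul, mul_comm]

def coordC {n : ℕ} (l : Fin n) (ξ : Rn n) : ℂ := (ξ l : ℂ)

lemma coordC_temp {n : ℕ} (l : Fin n) : (coordC l : Rn n → ℂ).HasTemperateGrowth := by
  exact (Complex.ofRealCLM.comp (EuclideanSpace.proj l : Rn n →L[ℝ] ℝ)).hasTemperateGrowth

lemma coordC_norm {n : ℕ} (l : Fin n) (ξ : Rn n) : ‖coordC l ξ‖ ≤ ‖ξ‖ := by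
  rw [coordC, Complex.norm_real]; exact PiLp.norm_apply_le ξ l

lemma coordC_smul {n : ℕ} (l : Fin n) (r : ℝ) (ξ : Rn n) :
    coordC l (r • ξ) = r * coordC l ξ := by
  simp [coordC]

def lerayS {n : ℕ} (j k : Fin n) (ξ : Rn n) : ℂ :=
  (((if j = k then 1 else 0) - ξ j * ξ k / ‖ξ‖ ^ 2 : ℝ) : ℂ)

lemma lerayS_bound {n : ℕ} (j k : Fin n) (ξ : Rn n) : ‖lerayS j k ξ‖ ≤ 2 := by
  rw [lerayS, Complex.norm_real]
  refine (norm_sub_le _ _).trans ?_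
  have h1 : ‖(if j = k then 1 else 0 : ℝ)‖ ≤ 1 := by split_ifs <;> simp
  have h2 : ‖ξ j * ξ k / ‖ξ‖ ^ 2‖ ≤ 1 := by
    rw [norm_div, norm_mul, norm_pow, norm_norm]
    refine div_le_one_of_le₀ ?_ (by positivity)
    rw [sq]
    gcongr <;> exact PiLp.norm_apply_le ξ _
  linarith

lemma lerayS_meas {n : ℕ} (j k : Fin n) : AEStronglyMeasurable (lerayS j k : Rn n → ℂ) volume := by
  apply Measurable.aestronglyMeasurable
  unfold lerayS
  fun_prop

lemma OI_main {n : ℕ} (hn : 0 < n) (R : Rn n → ℂ) (hR : R.HasTemperateGrowth) (m : ℕ)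
    (hom : ∀ r : ℝ, 0 < r → ∀ ξ, R (r • ξ) = (r : ℂ) ^ m * R ξ)
    (hA : ∀ ξ, ‖R ξ‖ ≤ ‖ξ‖ ^ m) (j k : Fin n) :
    ∃ C : ℝ, 0 ≤ C ∧ ∀ t : ℝ, 0 < t → ∀ x : Rn n,
      ‖OI (fun ξ => R ξ * lerayS j k ξ) t x‖ ≤ C * ((√t + ‖x‖) ^ (n + m))⁻¹ := by
  obtain ⟨C1, hC1, h1⟩ := OI_bound R hR m hom
  have hQb : ∀ ξ, ‖R ξ * (coordC j ξ * coordC k ξ)‖ ≤ 1 * ‖ξ‖ ^ (m + 2) := by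
    intro ξ
    rw [norm_mul, norm_mul, pow_add, one_mul, sq]
    gcongr
    · exact hA ξ
    · exact coordC_norm j ξ
    · exact coordC_norm k ξ
  obtain ⟨C2, hC2, h2⟩ := OI_bound2 hn (fun ξ => R ξ * (coordC j ξ * coordC k ξ))
    (hR.mul ((coordC_temp j).mul (coordC_temp k))) m
    (by intro r hr ξ; simp only [hom r hr, coordC_smul]; ring) hQb
  refine ⟨C1 + C2, by positivity, fun t ht x => ?_⟩
  set δ : ℂ := if j = k then 1 else 0 with hδ
  have hδ1 : ‖δ‖ ≤ 1 := by rw [hδ]; split_ifs <;> simp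
  have hi1 := OI_integrable t ht R hR.1.continuous.aestronglyMeasurable 1 m (by simpa using hA) x
  have hi2 := OI_integrable t ht (fun ξ => R ξ * (coordC j ξ * coordC k ξ) / (‖ξ‖ : ℂ) ^ 2)
    (by
      apply Measurable.aestronglyMeasurable
      have := hR.1.continuous.measurable
      have h3 := (coordC_temp j).1.continuous.measurable
      have h4 := (coordC_temp k).1.continuous.measurable
      fun_prop) 1 m (by
      intro ξ
      rw [norm_div, norm_pow, Complex.norm_real, norm_norm]
      refine div_le_of_le_mul₀ (by positivity) (by positivity) ?_
      rw [mul_assoc, ← pow_add]; exact hQb ξ) x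
  have key : OI (fun ξ => R ξ * lerayS j k ξ) t x = δ * OI R t x -
      OI (fun ξ => R ξ * (coordC j ξ * coordC k ξ) / (‖ξ‖ : ℂ) ^ 2) t x := by
    rw [OI, OI, OI, ← integral_const_mul, ← integral_sub (hi1.const_mul _) hi2]
    congr 1
    ext ξ
    have : lerayS j k ξ = δ - coordC j ξ * coordC k ξ / (‖ξ‖ : ℂ) ^ 2 := by
      rw [hδ, lerayS, coordC, coordC]; split_ifs <;> push_cast <;> rfl
    rw [this]; ring
  rw [key, add_mul]
  refine (norm_sub_le _ _).trans (add_le_add ?_ (h2 t ht x))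
  rw [norm_mul]
  exact (mul_le_of_le_one_left (norm_nonneg _) hδ1).trans (h1 t ht x)

lemma conv_aux (q : ℝ) (N : ℕ) (hN : (N : ℝ) = q) (t : ℝ) (ht : 0 < t) (y : ℝ) (hy : 0 ≤ y) :
    ((√t + y) ^ N)⁻¹ = t ^ (-q / 2) * (1 + (√t)⁻¹ * y) ^ (-q) := by
  have hs : 0 < √t := Real.sqrt_pos.2 ht
  have h1 : 1 + (√t)⁻¹ * y = (√t + y) / √t := by field_simp
  have h2 : t ^ (-q / 2) = (√t) ^ (-q) := by
    rw [Real.sqrt_eq_rpow, ← Real.rpow_mul ht.le]; congr 1; ring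
  rw [h1, h2, ← Real.mul_rpow hs.le (by positivity), mul_div_cancel₀ _ hs.ne',
    Real.rpow_neg (by positivity), ← hN, Real.rpow_natCast]

/-- The Oseen kernel `K_t` is `C¹` and satisfies the polynomial bounds
`|∂^β K_t^{jk}(x)| ≤ C t^{-(n+|β|)/2} (1 + t^{-1/2}|x|)^{-n-|β|}` for `|β| ≤ 1`. -/
theorem oseen_kernel_estimates (n : ℕ) (hn : 2 ≤ n) :
    ∃ C > (0 : ℝ), ∀ t > (0 : ℝ), ∀ j k : Fin n,
      ContDiff ℝ 1 (oseenKernel n t j k) ∧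
      (∀ x : Rn n, ‖oseenKernel n t j k x‖ ≤
        C * t ^ (-(n : ℝ) / 2) * (1 + (Real.sqrt t)⁻¹ * ‖x‖) ^ (-(n : ℝ))) ∧
      (∀ l : Fin n, ∀ x : Rn n, ‖pdiff l (oseenKernel n t j k) x‖ ≤
        C * t ^ (-((n : ℝ) + 1) / 2) * (1 + (Real.sqrt t)⁻¹ * ‖x‖) ^ (-(n : ℝ) - 1)) := by
  have hn0 : 0 < n := by omega
  have H0 := fun j k : Fin n => OI_main hn0 (fun _ => 1) (Function.HasTemperateGrowth.const 1) 0
    (by simp) (by simp) j k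
  have H1 := fun l j k : Fin n => OI_main hn0 (coordC l) (coordC_temp l) 1
    (by intro r _ ξ; rw [coordC_smul, pow_one]) (by intro ξ; simpa using coordC_norm l ξ) j k
  choose C0 hC0 h0 using H0
  choose C1 hC1 h1 using H1
  have s0 : 0 ≤ ∑ j, ∑ k, C0 j k :=
    Finset.sum_nonneg fun j _ => Finset.sum_nonneg fun k _ => hC0 j k
  have s1 : 0 ≤ ∑ l, ∑ j, ∑ k, C1 l j k :=
    Finset.sum_nonneg fun l _ => Finset.sum_nonneg fun j _ => Finset.sum_nonneg fun k _ => hC1 l j k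
  have b0 : ∀ j k, C0 j k ≤ ∑ j, ∑ k, C0 j k := fun j k =>
    (Finset.single_le_sum (f := fun k => C0 j k) (fun k _ => hC0 j k) (Finset.mem_univ k)).trans
    (Finset.single_le_sum (f := fun j => ∑ k, C0 j k)
      (fun j _ => Finset.sum_nonneg fun k _ => hC0 j k) (Finset.mem_univ j))
  have b1 : ∀ l j k, C1 l j k ≤ ∑ l, ∑ j, ∑ k, C1 l j k := fun l j k =>
    ((Finset.single_le_sum (f := fun k => C1 l j k) (fun k _ => hC1 l j k)
      (Finset.mem_univ k)).trans
    (Finset.single_le_sum (f := fun j => ∑ k, C1 l j k)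
      (fun j _ => Finset.sum_nonneg fun k _ => hC1 l j k) (Finset.mem_univ j))).trans
    (Finset.single_le_sum (f := fun l => ∑ j, ∑ k, C1 l j k)
      (fun l _ => Finset.sum_nonneg fun j _ => Finset.sum_nonneg fun k _ => hC1 l j k)
      (Finset.mem_univ l))
  set S0 := ∑ j, ∑ k, C0 j k
  set S1 := ∑ l, ∑ j, ∑ k, C1 l j k
  have hS1 : 0 ≤ 2 * π * S1 := by positivity
  refine ⟨S0 + 2 * π * S1 + 1, by positivity, fun t ht j k => ?_⟩
  have hK : oseenKernel n t j k = OI (lerayS j k) t := rfl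
  obtain ⟨hd, hp⟩ := OI_diff t ht (lerayS j k) (lerayS_meas j k) 2 (lerayS_bound j k)
  rw [hK]
  refine ⟨hd, fun x => ?_, fun l x => ?_⟩
  · rw [mul_assoc, ← conv_aux n n rfl t ht ‖x‖ (norm_nonneg x)]
    have := h0 j k t ht x
    simp only [one_mul, add_zero] at this
    refine this.trans ?_
    gcongr
    linarith [b0 j k]
  · rw [mul_assoc, show -(n : ℝ) - 1 = -((n : ℝ) + 1) by ring,
      ← conv_aux ((n : ℝ) + 1) (n + 1) (by push_cast; rfl) t ht ‖x‖ (norm_nonneg x), hp, norm_mul]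
    have e : ‖(2 * π * Complex.I : ℂ)‖ = 2 * π := by simp [abs_of_pos Real.pi_pos]
    rw [e]
    refine (mul_le_mul_of_nonneg_left (h1 l j k t ht x) (by positivity)).trans ?_
    rw [← mul_assoc]
    gcongr
    have := mul_le_mul_of_nonneg_left (b1 l j k) (by positivity : 0 ≤ 2 * π)
    linarith
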